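/- Let λ > 0 and let u be a real-valued solution of Δu + λ²u = 0 on ℝⁿ. If u is nonvanishing on the closed ball B̄(x⁰, r), then λ r < c_n, where c_n denotes the first positive zero of the Bessel function J_{(n−2)/2}. Equivalently: every real solution of the Helmholtz equation (Δ+λ²)u = 0 on ℝⁿ has a zero in every closed ball of radius c_n/λ. -/

import Mathlib

open Metric Set

noncomputable section

/-- The Laplacian of a real-valued function on Euclidean space. -/
def lap {n : ℕ} (u : EuclideanSpace ℝ (Fin n) → ℝ) (x : EuclideanSpace ℝ (Fin n)) : ℝ :=
  ∑ i : Fin n, fderiv ℝ (fun y => fderiv ℝ u y (EuclideanSpace.single i 1)) x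
    (EuclideanSpace.single i 1)

/-- The Bessel function of the first kind of order `ν`, via its power series (for `x > 0`). -/
def besselJ (ν x : ℝ) : ℝ :=
  ∑' m : ℕ, ((-1 : ℝ) ^ m / (m.factorial * Real.Gamma (m + ν + 1))) *
    (x / 2) ^ (2 * m) * (x / 2) ^ ν

/-- `c_n`: the first positive zero of the Bessel function `J_{(n-2)/2}`. -/
def besselZero (n : ℕ) : ℝ :=
  sInf {t : ℝ | 0 < t ∧ besselJ (((n : ℝ) - 2) / 2) t = 0}

theorem line_test {n : ℕ} (G : EuclideanSpace ℝ (Fin n) → ℝ) (hG : ContDiff ℝ 2 G)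
    (x : EuclideanSpace ℝ (Fin n)) (hmax : IsLocalMax G x) : lap G x ≤ 0 := by
  unfold lap
  refine Finset.sum_nonpos fun i _ => ?_
  by_contra! hpos
  set e : EuclideanSpace ℝ (Fin n) := EuclideanSpace.single i 1 with he
  have hl : ∀ s : ℝ, HasDerivAt (fun s : ℝ => x + s • e) e s := fun s => by
    simpa using ((hasDerivAt_id s).smul_const e).const_add x
  have hd1 : ∀ s : ℝ, HasDerivAt (fun s : ℝ => G (x + s • e)) (fderiv ℝ G (x + s • e) e) s := by
    intro s
    exact ((hG.differentiable (by norm_num)) (x + s • e)).hasFDerivAt.comp_hasDerivAt s (hl s)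
  have hG1 : ContDiff ℝ 1 (fun y => fderiv ℝ G y e) :=
    (hG.fderiv_right (m := 1) (by norm_num)).clm_apply contDiff_const
  have hder : deriv (fun s : ℝ => G (x + s • e)) = fun s => fderiv ℝ G (x + s • e) e :=
    funext fun s => (hd1 s).deriv
  have hd2 : HasDerivAt (fun s : ℝ => fderiv ℝ G (x + s • e) e)
      (fderiv ℝ (fun y => fderiv ℝ G y e) x e) 0 := by
    have h := ((hG1.differentiable (by norm_num)) (x + (0:ℝ) • e)).hasFDerivAt.comp_hasDerivAt
      (0:ℝ) (hl 0)
    simpa [Function.comp_def] using h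
  have hm : IsLocalMax (fun s : ℝ => G (x + s • e)) 0 := by
    have hc : Filter.Tendsto (fun s : ℝ => x + s • e) (nhds 0) (nhds x) := by
      have := (hl 0).continuousAt.tendsto
      simpa using this
    have := hc.eventually hmax
    simpa [IsLocalMax, IsMaxFilter] using this
  have h0 : deriv (fun s : ℝ => G (x + s • e)) 0 = 0 := hm.deriv_eq_zero
  have hmin := isLocalMin_of_deriv_deriv_pos (f := fun s : ℝ => G (x + s • e)) (x₀ := 0)
    (by rw [hder, hd2.deriv]; exact hpos) h0 (hd1 0).continuousAt
  have hconst : (fun s : ℝ => G (x + s • e)) =ᶠ[nhds 0] fun _ => G (x + (0:ℝ) • e) := by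
    filter_upwards [hm, hmin] with s h1 h2 using le_antisymm h1 h2
  have h3 := hconst.deriv.deriv_eq
  rw [hder, hd2.deriv] at h3
  simp at h3
  exact hpos.ne' h3

theorem lap_sub_mul {n : ℕ} (v U : EuclideanSpace ℝ (Fin n) → ℝ) (hv : ContDiff ℝ 2 v)
    (hU : ContDiff ℝ 2 U) (M : ℝ) (x : EuclideanSpace ℝ (Fin n)) :
    lap (fun y => v y - M * U y) x = lap v x - M * lap U x := by
  unfold lap
  rw [Finset.mul_sum, ← Finset.sum_sub_distrib]
  refine Finset.sum_congr rfl fun i _ => ?_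
  set e : EuclideanSpace ℝ (Fin n) := EuclideanSpace.single i 1 with he
  have d : ∀ f : EuclideanSpace ℝ (Fin n) → ℝ, ContDiff ℝ 2 f →
      Differentiable ℝ f ∧ Differentiable ℝ (fun y => fderiv ℝ f y e) := fun f hf =>
    ⟨hf.differentiable (by norm_num),
     ((hf.fderiv_right (m := 1) (by norm_num)).clm_apply contDiff_const).differentiable
      (by norm_num)⟩
  have h1 : (fun y => fderiv ℝ (fun y => v y - M * U y) y e)
      = fun y => fderiv ℝ v y e - M * fderiv ℝ U y e := by
    funext y
    have h : HasFDerivAt (fun y => v y - M * U y) _ y :=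
      ((d v hv).1 y).hasFDerivAt.sub (((d U hU).1 y).hasFDerivAt.const_mul M)
    rw [h.fderiv]
    simp
  have h : HasFDerivAt (fun y => fderiv ℝ v y e - M * fderiv ℝ U y e) _ x :=
    ((d v hv).2 x).hasFDerivAt.sub (((d U hU).2 x).hasFDerivAt.const_mul M)
  rw [h1, h.fderiv]
  simp

theorem comparison {n : ℕ} (v U : EuclideanSpace ℝ (Fin n) → ℝ) (hv : ContDiff ℝ 2 v)
    (hU : ContDiff ℝ 2 U) (x₀ : EuclideanSpace ℝ (Fin n)) (R : ℝ) (hR : 0 < R)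
    (hpos : ∀ x ∈ closedBall x₀ R, 0 < U x)
    (hbd : ∀ x ∈ sphere x₀ R, v x = 0) (h0 : 0 < v x₀)
    (hlap : ∀ x ∈ ball x₀ R, 0 < v x → 0 < U x * lap v x - v x * lap U x) : False := by
  have hc : ContinuousOn (fun x => v x / U x) (closedBall x₀ R) :=
    hv.continuous.continuousOn.div hU.continuous.continuousOn fun x hx => (hpos x hx).ne'
  obtain ⟨x, hx, hmax⟩ := (isCompact_closedBall x₀ R).exists_isMaxOn
    ⟨x₀, mem_closedBall_self hR.le⟩ hc
  have hx0 := mem_closedBall_self (x := x₀) hR.le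
  have hM : 0 < v x / U x := lt_of_lt_of_le (div_pos h0 (hpos x₀ hx0)) (hmax hx0)
  have hvx : 0 < v x := by
    have := mul_pos hM (hpos x hx)
    rwa [div_mul_cancel₀ _ (hpos x hx).ne'] at this
  have hxb : x ∈ ball x₀ R := by
    rcases lt_or_eq_of_le (mem_closedBall.1 hx) with h | h
    · exact h
    · exact absurd (hbd x h) hvx.ne'
  have hm : IsLocalMax (fun y => v y - (v x / U x) * U y) x := by
    filter_upwards [isOpen_ball.mem_nhds hxb] with y hy
    have hy' := ball_subset_closedBall hy
    have h1 : v y / U y ≤ v x / U x := hmax hy'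
    rw [div_le_iff₀ (hpos y hy')] at h1
    rw [div_mul_cancel₀ _ (hpos x hx).ne']
    linarith
  have h2 := line_test _ (hv.sub (contDiff_const.mul hU)) x hm
  rw [lap_sub_mul v U hv hU] at h2
  have h3 := hlap x hxb hvx
  have h4 := mul_nonpos_of_nonneg_of_nonpos (hpos x hx).le h2
  have : U x * (lap v x - v x / U x * lap U x) = U x * lap v x - v x * lap U x := by
    have := (hpos x hx).ne'
    field_simp
  linarith

theorem lap_radial {n : ℕ} (g g1 g2 : ℝ → ℝ) (h1 : ∀ s, HasDerivAt g (g1 s) s)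
    (h2 : ∀ s, HasDerivAt g1 (g2 s) s) (x₀ x : EuclideanSpace ℝ (Fin n)) :
    lap (fun y => g (‖y - x₀‖ ^ 2)) x
      = 4 * ‖x - x₀‖ ^ 2 * g2 (‖x - x₀‖ ^ 2) + 2 * n * g1 (‖x - x₀‖ ^ 2) := by
  have hn : ∀ y : EuclideanSpace ℝ (Fin n), HasFDerivAt (fun y => ‖y - x₀‖ ^ 2)
      (2 • (innerSL ℝ (y - x₀))) y := fun y => by
    simpa using ((hasFDerivAt_id y).sub_const x₀).norm_sq
  have key : ∀ i : Fin n, fderiv ℝ (fun y => fderiv ℝ (fun y => g (‖y - x₀‖ ^ 2)) y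
      (EuclideanSpace.single i 1)) x (EuclideanSpace.single i 1)
      = 4 * g2 (‖x - x₀‖ ^ 2) * (x i - x₀ i) ^ 2 + 2 * g1 (‖x - x₀‖ ^ 2) := by
    intro i
    have e1 : (fun y => fderiv ℝ (fun y => g (‖y - x₀‖ ^ 2)) y (EuclideanSpace.single i 1))
        = fun y => g1 (‖y - x₀‖ ^ 2) * (2 * (y i - x₀ i)) := by
      funext y
      have h : HasFDerivAt (fun y => g (‖y - x₀‖ ^ 2)) _ y := (h1 _).comp_hasFDerivAt y (hn y)
      rw [h.fderiv]
      simp [EuclideanSpace.inner_single_right]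
    have hc : HasFDerivAt (fun y : EuclideanSpace ℝ (Fin n) => 2 * (y i - x₀ i))
        ((2:ℝ) • (EuclideanSpace.proj i : EuclideanSpace ℝ (Fin n) →L[ℝ] ℝ)) x :=
      ((EuclideanSpace.proj i : EuclideanSpace ℝ (Fin n) →L[ℝ] ℝ).hasFDerivAt.sub_const
        (x₀ i)).const_mul 2
    have h : HasFDerivAt (fun y => g1 (‖y - x₀‖ ^ 2) * (2 * (y i - x₀ i))) _ x :=
      ((h2 _).comp_hasFDerivAt x (hn x)).mul hc
    rw [e1, h.fderiv]
    simp [EuclideanSpace.inner_single_right]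
    ring
  unfold lap
  rw [Finset.sum_congr rfl fun i _ => key i, Finset.sum_add_distrib, ← Finset.mul_sum,
    EuclideanSpace.real_norm_sq_eq]
  simp
  ring

/-- coefficients bound is inherited by the derivative -/
theorem series_deriv (a : ℕ → ℝ) (K : ℝ) (ha : ∀ m, |a m| ≤ K / m.factorial) (s : ℝ) :
    HasDerivAt (fun s : ℝ => ∑' m, a m * s ^ m) (∑' m : ℕ, ((m + 1 : ℝ) * a (m + 1)) * s ^ m) s := by
  have hK : 0 ≤ K := by simpa using (abs_nonneg _).trans (ha 0)
  set R := |s| + 1 with hRdef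
  have hR : 0 < R := by positivity
  have hs : s ∈ ball (0:ℝ) R := by simp [hRdef]
  have hexp : Summable fun m : ℕ => K * (R ^ m / m.factorial) :=
    (Real.summable_pow_div_factorial R).mul_left K
  let b : ℕ → ℝ := fun m => |m * a m| * R ^ (m - 1)
  have hb : Summable b := by
    rw [← summable_nat_add_iff 1]
    refine Summable.of_nonneg_of_le (fun m => by positivity) (fun m => ?_) hexp
    have h := ha (m + 1)
    simp only [b, Nat.add_sub_cancel, abs_mul, Nat.abs_cast]
    rw [le_div_iff₀ (by positivity), Nat.factorial_succ] at h
    push_cast at h ⊢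
    rw [mul_div_assoc', le_div_iff₀ (by positivity)]
    calc _ = (|a (m+1)| * ((m + 1) * m.factorial)) * R ^ m := by ring
      _ ≤ K * R ^ m := by gcongr
  have hsum : Summable fun m => a m * s ^ m := by
    refine Summable.of_norm_bounded hexp fun m => ?_
    rw [Real.norm_eq_abs, abs_mul, abs_pow]
    calc _ ≤ (K / m.factorial) * R ^ m := by
            gcongr
            · exact ha m
            · linarith
      _ = _ := by ring
  have hbound : ∀ (m : ℕ) (y : ℝ), y ∈ ball (0:ℝ) R → ‖a m * (m * y ^ (m - 1))‖ ≤ b m := by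
    intro m y hy
    have hy' : |y| ≤ R := by simpa using (mem_ball.1 hy).le
    rw [Real.norm_eq_abs, ← mul_assoc, mul_comm (a m), abs_mul, abs_pow]
    simp only [b]
    gcongr
  have h := hasDerivAt_tsum_of_isPreconnected (g := fun m s => a m * s ^ m)
    (g' := fun m s => a m * (m * s ^ (m - 1))) hb isOpen_ball
    (convex_ball (0:ℝ) R).isPreconnected
    (fun m y _ => (hasDerivAt_pow m y).const_mul (a m)) hbound hs hsum hs
  refine h.congr_deriv ?_
  have hs2 : Summable fun m : ℕ => a m * (m * s ^ (m - 1)) :=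
    Summable.of_norm_bounded hb fun m => hbound m s hs
  rw [hs2.tsum_eq_zero_add]
  simp only [Nat.cast_zero, zero_mul, mul_zero, zero_add, Nat.add_sub_cancel]
  refine tsum_congr fun m => ?_
  push_cast
  ring

theorem bound_succ (a : ℕ → ℝ) (K : ℝ) (ha : ∀ m, |a m| ≤ K / m.factorial) (m : ℕ) :
    |(m + 1 : ℝ) * a (m + 1)| ≤ K / m.factorial := by
  have h := ha (m + 1)
  rw [le_div_iff₀ (by positivity), Nat.factorial_succ] at h
  rw [le_div_iff₀ (by positivity), abs_mul, abs_of_pos (by positivity : (0:ℝ) < m + 1)]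
  push_cast at h
  linarith

theorem series_contDiff (k : ℕ) : ∀ (a : ℕ → ℝ) (K : ℝ) (_ : ∀ m, |a m| ≤ K / m.factorial),
    ContDiff ℝ k (fun s : ℝ => ∑' m, a m * s ^ m) := by
  induction k with
  | zero =>
    intro a K ha
    have : Differentiable ℝ (fun s : ℝ => ∑' m, a m * s ^ m) :=
      fun s => (series_deriv a K ha s).differentiableAt
    simpa [contDiff_zero] using this.continuous
  | succ k ih =>
    intro a K ha
    push_cast
    rw [contDiff_succ_iff_deriv]
    refine ⟨fun s => (series_deriv a K ha s).differentiableAt, by simp, ?_⟩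
    rw [show deriv (fun s : ℝ => ∑' m, a m * s ^ m)
      = fun s => ∑' m : ℕ, ((m + 1 : ℝ) * a (m + 1)) * s ^ m from
      funext fun s => (series_deriv a K ha s).deriv]
    exact ih _ K (bound_succ a K ha)

def bco (n m : ℕ) : ℝ :=
  (-1 : ℝ) ^ m / (m.factorial * Real.Gamma (m + ((n : ℝ) - 2) / 2 + 1)) / 4 ^ m

theorem bco_succ {n : ℕ} (hn : 1 ≤ n) (m : ℕ) :
    4 * (m + 1) * (m + n / 2) * bco n (m + 1) = - bco n m := by
  have hn' : (1:ℝ) ≤ n := by exact_mod_cast hn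
  have hp : (0:ℝ) < m + n / 2 := by positivity
  have e1 : ((m + 1 : ℕ) : ℝ) + ((n : ℝ) - 2) / 2 + 1 = (m + n / 2) + 1 := by push_cast; ring
  have e2 : (m : ℝ) + ((n : ℝ) - 2) / 2 + 1 = (m + n / 2) := by ring
  have hG := (Real.Gamma_pos_of_pos hp).ne'
  have hp' := hp.ne'
  unfold bco
  rw [e1, e2, Real.Gamma_add_one hp', Nat.factorial_succ]
  set γ := Real.Gamma (m + n / 2)
  set q := (m + n / 2 : ℝ)
  push_cast
  field_simp
  ring

theorem bco_bound {n : ℕ} (hn : 1 ≤ n) (m : ℕ) : |bco n m| ≤ |bco n 0| / m.factorial := by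
  have hn' : (1:ℝ) ≤ n := by exact_mod_cast hn
  induction m with
  | zero => simp
  | succ m ih =>
    have h := congrArg abs (bco_succ hn m)
    rw [abs_neg, abs_mul, abs_of_pos (by positivity)] at h
    rw [le_div_iff₀ (by positivity)] at ih ⊢
    rw [Nat.factorial_succ]
    push_cast
    have h2 : (m + 1) * |bco n (m + 1)| ≤ |bco n m| := by
      rw [← h]
      gcongr
      have : (1:ℝ) ≤ 4 * (m + n / 2) := by
        have : (0:ℝ) ≤ m := by positivity
        linarith
      nlinarith [(by positivity : (0:ℝ) ≤ (m:ℝ))]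
    calc _ = ((m + 1) * |bco n (m + 1)|) * m.factorial := by ring
      _ ≤ |bco n m| * m.factorial := by gcongr
      _ ≤ _ := ih

def bg (n : ℕ) (s : ℝ) : ℝ := ∑' m, bco n m * s ^ m

theorem bg_data {n : ℕ} (hn : 1 ≤ n) : ContDiff ℝ 2 (bg n) ∧ ∃ g1 g2 : ℝ → ℝ,
    (∀ s, HasDerivAt (bg n) (g1 s) s) ∧ (∀ s, HasDerivAt g1 (g2 s) s) ∧
    ∀ s, 4 * s * g2 s + 2 * n * g1 s = - bg n s := by
  have hb := bco_bound hn
  set K := |bco n 0|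
  set a1 : ℕ → ℝ := fun m => (m + 1 : ℝ) * bco n (m + 1) with ha1
  set a2 : ℕ → ℝ := fun m => (m + 1 : ℝ) * a1 (m + 1) with ha2
  have hb1 : ∀ m, |a1 m| ≤ K / m.factorial := bound_succ _ K hb
  have hb2 : ∀ m, |a2 m| ≤ K / m.factorial := bound_succ _ K hb1
  refine ⟨series_contDiff 2 _ K hb, fun s => ∑' m, a1 m * s ^ m, fun s => ∑' m, a2 m * s ^ m,
    series_deriv _ K hb, series_deriv _ K hb1, fun s => ?_⟩
  have hsum : ∀ a : ℕ → ℝ, (∀ m, |a m| ≤ K / m.factorial) → Summable fun m => a m * s ^ m := by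
    intro a ha
    refine Summable.of_norm_bounded ((Real.summable_pow_div_factorial |s|).mul_left K) fun m => ?_
    rw [Real.norm_eq_abs, abs_mul, abs_pow]
    calc _ ≤ (K / m.factorial) * |s| ^ m := by
            gcongr
            exact ha m
      _ = _ := by ring
  have hs2 : s * ∑' m, a2 m * s ^ m = ∑' m : ℕ, (m * a1 m) * s ^ m := by
    have hh : ∀ m : ℕ, ((m + 1 : ℕ) * a1 (m + 1)) * s ^ (m + 1) = s * (a2 m * s ^ m) := by
      intro m; simp only [ha2]; push_cast; ring
    have hsm : Summable fun m : ℕ => (m * a1 m) * s ^ m := by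
      rw [← summable_nat_add_iff 1]
      simp only [hh]
      exact (hsum a2 hb2).mul_left s
    rw [hsm.tsum_eq_zero_add]
    simp only [hh]
    simp [tsum_mul_left]
  have hsm : Summable fun m : ℕ => (m * a1 m) * s ^ m := by
    have hh : ∀ m : ℕ, ((m + 1 : ℕ) * a1 (m + 1)) * s ^ (m + 1) = s * (a2 m * s ^ m) := by
      intro m; simp only [ha2]; push_cast; ring
    rw [← summable_nat_add_iff 1]
    simp only [hh]
    exact (hsum a2 hb2).mul_left s
  simp only
  rw [mul_assoc, hs2, ← tsum_mul_left, ← tsum_mul_left,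
    ← (hsm.mul_left 4).tsum_add ((hsum a1 hb1).mul_left _), bg, ← tsum_neg]
  refine tsum_congr fun m => ?_
  have := bco_succ hn m
  rw [← neg_mul, ← this]
  simp only [ha1]
  ring

theorem besselJ_eq (n : ℕ) (t : ℝ) :
    besselJ (((n : ℝ) - 2) / 2) t = bg n (t ^ 2) * (t / 2) ^ (((n : ℝ) - 2) / 2) := by
  unfold besselJ bg
  rw [← tsum_mul_right]
  refine tsum_congr fun m => ?_
  unfold bco
  rw [div_pow, pow_mul, pow_mul]
  norm_num
  left
  ring

theorem besselJ_zero_iff (n : ℕ) {t : ℝ} (ht : 0 < t) :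
    besselJ (((n : ℝ) - 2) / 2) t = 0 ↔ bg n (t ^ 2) = 0 := by
  rw [besselJ_eq, mul_eq_zero]
  have : (t / 2) ^ (((n : ℝ) - 2) / 2) ≠ 0 := (Real.rpow_pos_of_pos (by positivity) _).ne'
  simp [this]

theorem bg_zero {n : ℕ} (hn : 1 ≤ n) : 0 < bg n 0 := by
  have hn' : (1:ℝ) ≤ n := by exact_mod_cast hn
  unfold bg
  rw [tsum_eq_single 0 (by intro m hm; simp [hm])]
  have : 0 < Real.Gamma (((n : ℝ) - 2) / 2 + 1) := Real.Gamma_pos_of_pos (by linarith)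
  simp [bco, this]

theorem exists_zero {n : ℕ} (hn : 1 ≤ n) : ∃ t : ℝ, 0 < t ∧ bg n (t ^ 2) = 0 := by
  by_contra! hne
  obtain ⟨hcd, g1, g2, h1, h2, hode⟩ := bg_data hn
  have hpos : ∀ s, 0 ≤ s → 0 < bg n s := by
    intro s hs
    by_contra! hle
    obtain ⟨c, hc, hc0⟩ := intermediate_value_Icc' hs hcd.continuous.continuousOn
      ⟨hle, (bg_zero hn).le⟩
    have hcp : 0 < c := by
      rcases hc.1.lt_or_eq with h | h
      · exact h
      · rw [← h] at hc0; exact absurd hc0 (bg_zero hn).ne'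
    refine hne (Real.sqrt c) (Real.sqrt_pos.2 hcp) ?_
    rwa [Real.sq_sqrt hcp.le]
  set C : ℝ := (8 + 4 * n) ^ 2 with hC
  have hCp : 0 < C := by positivity
  have hp1 : ∀ s : ℝ, HasDerivAt (fun s : ℝ => (C - s) ^ 2) (-2 * (C - s)) s := fun s => by
    have := ((hasDerivAt_id s).const_sub C).pow 2
    exact this.congr_deriv (by simp)
  have hp2 : ∀ s : ℝ, HasDerivAt (fun s : ℝ => -2 * (C - s)) 2 s := fun s => by
    have := ((hasDerivAt_id s).const_sub C).const_mul (-2)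
    exact this.congr_deriv (by simp)
  have hnc : ContDiff ℝ 2 (fun y : EuclideanSpace ℝ (Fin n) => ‖y - 0‖ ^ 2) :=
    (contDiff_id.sub contDiff_const).norm_sq ℝ
  refine comparison (n := n) (fun y => (C - ‖y - 0‖ ^ 2) ^ 2) (fun y => bg n (‖y - 0‖ ^ 2))
    ((contDiff_const.sub hnc).pow 2) (hcd.comp hnc) 0 (Real.sqrt C) (Real.sqrt_pos.2 hCp)
    (fun x _ => hpos _ (by positivity)) ?_ ?_ ?_
  · intro x hx
    have : ‖x - 0‖ = Real.sqrt C := by simpa using hx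
    rw [this, Real.sq_sqrt hCp.le]; simp
  · simp; positivity
  · intro x _ _
    rw [lap_radial _ _ _ hp1 hp2, lap_radial _ _ _ h1 h2, hode]
    set s := ‖x - 0‖ ^ 2
    have hs : 0 ≤ s := by positivity
    have hb := hpos s hs
    have : 0 < 4 * s * 2 + 2 * n * (-2 * (C - s)) + (C - s) ^ 2 := by
      nlinarith [sq_nonneg ((C - s) - (4 + 2 * n))]
    nlinarith [mul_pos hb this]

theorem scaled_bound {n : ℕ} (hn : 1 ≤ n)
    (lam : ℝ) (hlam : 0 < lam)
    (u : EuclideanSpace ℝ (Fin n) → ℝ) (hu : ContDiff ℝ 2 u)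
    (hueq : ∀ x, lap u x + lam ^ 2 * u x = 0)
    (x₀ : EuclideanSpace ℝ (Fin n)) (R : ℝ) (hR : 0 < R)
    (hpos : ∀ x ∈ closedBall x₀ R, 0 < u x) (t : ℝ) (ht : 0 < t) (hz : bg n (t ^ 2) = 0) :
    lam * R ≤ t := by
  by_contra! hlt
  obtain ⟨hcd, g1, g2, h1, h2, hode⟩ := bg_data hn
  set k : ℝ := (t / R) ^ 2 with hk
  have hkl : k < lam ^ 2 := by
    have : t / R < lam := by rwa [div_lt_iff₀ hR]
    rw [hk]
    gcongr
  have hl : ∀ s, HasDerivAt (fun s : ℝ => k * s) k s := fun s => by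
    simpa using (hasDerivAt_id s).const_mul k
  have hp1 : ∀ s : ℝ, HasDerivAt (fun s : ℝ => bg n (k * s)) (g1 (k * s) * k) s := fun s =>
    (h1 (k * s)).comp s (hl s)
  have hp2 : ∀ s : ℝ, HasDerivAt (fun s : ℝ => g1 (k * s) * k) (g2 (k * s) * k * k) s := fun s =>
    ((h2 (k * s)).comp s (hl s)).mul_const k
  have hnc : ContDiff ℝ 2 (fun y : EuclideanSpace ℝ (Fin n) => k * ‖y - x₀‖ ^ 2) :=
    contDiff_const.mul ((contDiff_id.sub contDiff_const).norm_sq ℝ)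
  refine comparison (n := n) (fun y => bg n (k * ‖y - x₀‖ ^ 2)) u
    (hcd.comp hnc) hu x₀ R hR hpos ?_ ?_ ?_
  · intro x hx
    have : ‖x - x₀‖ = R := by simpa [dist_eq_norm] using hx
    change bg n (k * ‖x - x₀‖ ^ 2) = 0
    rw [this, hk, ← mul_pow, div_mul_cancel₀ _ hR.ne', hz]
  · simpa using bg_zero hn
  · intro x hx hv
    have hux := hpos x (ball_subset_closedBall hx)
    rw [lap_radial _ _ _ hp1 hp2]
    have e1 : lap u x = - (lam ^ 2 * u x) := by linarith [hueq x]
    have e2 := hode (k * ‖x - x₀‖ ^ 2)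
    rw [e1]
    set s := ‖x - x₀‖ ^ 2
    have e3 : 4 * s * (g2 (k * s) * k * k) + 2 * n * (g1 (k * s) * k) = - k * bg n (k * s) := by
      linear_combination k * e2
    rw [e3]
    have := mul_pos (mul_pos hux hv) (sub_pos.2 hkl)
    linarith

/-- a real solution of the Helmholtz equation `Δu + λ²u = 0` on `ℝⁿ` which is
nonvanishing on a closed ball of radius `r` forces `λ r < c_n`; equivalently every real
Helmholtz solution vanishes somewhere in every closed ball of radius `c_n / λ`. -/
theorem helmholtz_nonvanishing_ball_radius {n : ℕ} (hn : 1 ≤ n)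
    (lam : ℝ) (hlam : 0 < lam)
    (u : EuclideanSpace ℝ (Fin n) → ℝ) (hu : ContDiff ℝ 2 u)
    (hueq : ∀ x, lap u x + lam ^ 2 * u x = 0)
    (x₀ : EuclideanSpace ℝ (Fin n)) (r : ℝ) (hr : 0 < r)
    (hnonvan : ∀ x ∈ closedBall x₀ r, u x ≠ 0) :
    lam * r < besselZero n := by
  obtain ⟨δ, hδ, hsub⟩ := (isCompact_closedBall x₀ r).exists_cthickening_subset_open
    (isOpen_ne_fun hu.continuous (continuous_const (y := (0:ℝ)))) hnonvan
  rw [cthickening_closedBall hδ.le hr.le] at hsub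
  set R := δ + r with hRd
  have hR : 0 < R := by positivity
  have hle : ∀ t, 0 < t → bg n (t ^ 2) = 0 → lam * R ≤ t := by
    intro t ht hz
    have hpre := (convex_closedBall x₀ R).isPreconnected
    have hx0 := mem_closedBall_self (x := x₀) hR.le
    rcases lt_or_gt_of_ne (hsub hx0) with h0 | h0
    · have hneg : ∀ x ∈ closedBall x₀ R, 0 < -u x := by
        intro x hx
        by_contra! hle
        obtain ⟨y, hy, hy0⟩ := hpre.intermediate_value hx0 hx hu.continuous.continuousOn
          ⟨h0.le, by linarith⟩
        exact hsub hy hy0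
      refine scaled_bound hn lam hlam (fun x => -u x) hu.neg (fun x => ?_) x₀ R hR hneg t ht hz
      have := lap_sub_mul (fun _ => 0) u contDiff_const hu 1 x
      have hz0 : lap (fun _ : EuclideanSpace ℝ (Fin n) => (0:ℝ)) x = 0 := by simp [lap]
      simp only [zero_sub, one_mul, hz0] at this
      rw [this]
      linarith [hueq x]
    · have hp : ∀ x ∈ closedBall x₀ R, 0 < u x := by
        intro x hx
        by_contra! hle
        obtain ⟨y, hy, hy0⟩ := hpre.intermediate_value hx hx0 hu.continuous.continuousOn
          ⟨hle, h0.le⟩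
        exact hsub hy hy0
      exact scaled_bound hn lam hlam u hu hueq x₀ R hR hp t ht hz
  have h1 : lam * R ≤ besselZero n := by
    obtain ⟨t, ht, hz⟩ := exists_zero hn
    refine le_csInf ⟨t, ht, (besselJ_zero_iff n ht).2 hz⟩ ?_
    rintro s ⟨hs, hs0⟩
    exact hle s hs ((besselJ_zero_iff n hs).1 hs0)
  refine lt_of_lt_of_le ?_ h1
  gcongr
  linarith
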